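/- arXiv:1410.2588 — 2 statements merged into one kernel-verified Lean document; each statement's English description precedes it below -/
import Mathlib

section
/- Let ρ ∈ L¹(0,1) with ρ(x) > 0 for a.e. x ∈ (0,1), and let θ₀ ∈ (−π/2, π/2]. For each λ ≥ 1 there exists a unique absolutely continuous function θ_λ : [0,1] → ℝ with θ_λ(0) = θ₀ and θ_λ'(x) = cos²θ_λ(x) + λ ρ(x) sin²θ_λ(x) for a.e. x ∈ (0,1). Moreover, θ_λ(1) → +∞ as λ → +∞. -/
open MeasureTheory Set Filter Topology Real

/-!
The right-hand side is Lipschitz in `θ` with constant `|λρ - 1|`, an integrable function of `t`.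
By induction the `n`-th iterate of the Picard operator is Lipschitz with constant `(∫ k)ⁿ / n!`,
where `k = |λρ - 1|`, so some iterate is a contraction.

For the blow-up, suppose `θ_λ(1) < M` for a large `λ`. Then `λ ∫ ρ sin² θ_λ ≤ M - θ₀`, and since
`ρ > 0` almost everywhere this makes `∫ sin² θ_λ` small: the solution lingers near the zeros of the
sine. It must nevertheless cross them at speed about `1`: as `θ_λ' ≥ cos² θ_λ`, the substitution
`y = θ_λ(t)` gives `∫_{θ₀}^{θ_λ(1)} (cos² y)ⁿ dy ≥ ∫ (cos² θ_λ)ⁿ⁺¹ ≥ 1 - (n + 1) ∫ sin² θ_λ`.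
The left side is at most `∫_{θ₀}^M (cos² y)ⁿ dy`, which tends to `0` as `n → ∞`, so fixing a large
`n` and then letting `λ → ∞` gives a contradiction.
-/

section ChangeOfVariables

variable {f g U : ℝ → ℝ} {a b c : ℝ}

theorem absolutelyContinuousOnInterval_comp_of_contDiff {G : ℝ → ℝ} (hG : ContDiff ℝ 1 G)
    (hU : AbsolutelyContinuousOnInterval U a b) :
    AbsolutelyContinuousOnInterval (G ∘ U) a b := by
  obtain ⟨M, hM⟩ := hU.exists_bound
  obtain ⟨K, hK⟩ := hG.contDiffOn.exists_lipschitzOnWith one_ne_zero (convex_closedBall (0 : ℝ) M)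
    (isCompact_closedBall 0 M)
  have hmem : ∀ t ∈ uIcc a b, U t ∈ Metric.closedBall (0 : ℝ) M := fun t ht =>
    mem_closedBall_zero_iff.2 (hM t ht)
  refine squeeze_zero' (.of_forall fun _ => Finset.sum_nonneg fun _ _ => dist_nonneg) ?_
    (by simpa using Tendsto.const_mul (K : ℝ) hU)
  rw [eventually_inf_principal]
  filter_upwards with E hE
  rw [Finset.mul_sum]
  exact Finset.sum_le_sum fun i hi =>
    hK.dist_le_mul _ (hmem _ (hE.1 i hi).1) _ (hmem _ (hE.1 i hi).2)

theorem integral_comp_mul_deriv_of_absolutelyContinuousOnInterval (hg : Continuous g)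
    (hU : AbsolutelyContinuousOnInterval U a b) :
    ∫ t in a..b, g (U t) * deriv U t = ∫ y in U a..U b, g y := by
  set G : ℝ → ℝ := fun y => ∫ s in U a..y, g s
  have hG : ∀ y, HasDerivAt G (g y) y := fun y => (hg.integral_hasStrictDerivAt (U a) y).hasDerivAt
  have hGC : ContDiff ℝ 1 G := contDiff_one_iff_deriv.2
    ⟨fun y => (hG y).differentiableAt, by rwa [funext fun y => (hG y).deriv]⟩
  have hFTC := (absolutelyContinuousOnInterval_comp_of_contDiff hGC hU).integral_deriv_eq_sub
  simp only [G, Function.comp_apply, intervalIntegral.integral_same, sub_zero] at hFTC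
  rw [← hFTC]
  refine intervalIntegral.integral_congr_ae ?_
  filter_upwards [hU.ae_differentiableAt] with t ht htab
  exact (((hG (U t)).comp t (ht (uIoc_subset_uIcc htab)).hasDerivAt).deriv).symm

theorem integral_comp_mul_of_eqOn_primitive (hg : Continuous g)
    (hf : IntervalIntegrable f volume a b)
    (hU : EqOn U (fun x => c + ∫ s in a..x, f s) (uIcc a b)) :
    ∫ t in a..b, g (U t) * f t = ∫ y in U a..U b, g y := by
  have hac : AbsolutelyContinuousOnInterval (fun x => c + ∫ s in a..x, f s) a b :=
    (LipschitzWith.const c).lipschitzOnWith.absolutelyContinuousOnInterval.fun_add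
      (hf.absolutelyContinuousOnInterval_intervalIntegral left_mem_uIcc)
  rw [hU left_mem_uIcc, hU right_mem_uIcc,
    ← integral_comp_mul_deriv_of_absolutelyContinuousOnInterval hg hac]
  refine intervalIntegral.integral_congr_ae ?_
  filter_upwards [hf.ae_hasDerivAt_integral] with t ht htab
  have htab' := uIoc_subset_uIcc htab
  rw [hU htab', ((ht htab' a left_mem_uIcc).const_add c).deriv]

theorem integral_pow_primitive_mul (hf : IntervalIntegrable f volume a b) (n : ℕ) :
    ∫ t in a..b, (∫ s in a..t, f s) ^ n * f t = (∫ s in a..b, f s) ^ (n + 1) / (n + 1) := by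
  rw [integral_comp_mul_of_eqOn_primitive (g := fun y => y ^ n) (continuous_pow n) hf
    (c := 0) fun x _ => (zero_add _).symm, integral_pow]
  simp

end ChangeOfVariables

section CaratheodoryEquation

open scoped NNReal Nat

variable {E : Type*} [NormedAddCommGroup E] [NormedSpace ℝ E]
  {F : ℝ → E → E} {k : ℝ → ℝ≥0} {a b : ℝ} {c : E} {u v : ℝ → E}

/-- `u` is a Carathéodory solution on `[a, b]` of the initial value problem `u' = F(t, u)`,
`u(a) = c`. It is encoded by the integral equation, whose continuous solutions are the absolutely
continuous functions satisfying the differential equation almost everywhere. -/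
structure IsCaratheodorySolution (F : ℝ → E → E) (a b : ℝ) (c : E) (u : ℝ → E) : Prop where
  continuousOn : ContinuousOn u (Icc a b)
  eqOn_picard : EqOn u (ODE.picard F a c u) (Icc a b)

/-- The Carathéodory conditions for global well-posedness of `u' = F(t, u)` on `[a, b]`: `F(t, ·)`
is Lipschitz with a constant `k t` integrable in `t`. Measurability and integrability of `F` are
encoded by integrability of `t ↦ F(t, u(t))` for continuous `u`. -/
structure IsCaratheodoryLipschitz (F : ℝ → E → E) (k : ℝ → ℝ≥0) (a b : ℝ) : Prop where
  intervalIntegrable_comp : ∀ u : ℝ → E, ContinuousOn u (Icc a b) →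
    IntervalIntegrable (fun t => F t (u t)) volume a b
  intervalIntegrable_const : IntervalIntegrable (fun t => (k t : ℝ)) volume a b
  lipschitzWith : ∀ᵐ t ∂volume.restrict (Ioc a b), LipschitzWith (k t) (F t)

theorem picard_eqOn_of_eqOn (huv : EqOn u v (Icc a b)) :
    EqOn (ODE.picard F a c u) (ODE.picard F a c v) (Icc a b) := fun x hx => by
  simp only [ODE.picard_apply]
  congr 1
  refine intervalIntegral.integral_congr fun t ht => ?_
  rw [uIcc_of_le hx.1] at ht
  exact congrArg (F t) (huv ⟨ht.1, ht.2.trans hx.2⟩)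

theorem IsCaratheodorySolution.congr (hu : IsCaratheodorySolution F a b c u)
    (huv : EqOn u v (Icc a b)) : IsCaratheodorySolution F a b c v where
  continuousOn := hu.continuousOn.congr huv.symm
  eqOn_picard := huv.symm.trans (hu.eqOn_picard.trans (picard_eqOn_of_eqOn huv))

namespace IsCaratheodoryLipschitz

variable (hF : IsCaratheodoryLipschitz F k a b) (c) (hab : a ≤ b)

include hF in
theorem continuousOn_picard (hu : ContinuousOn u (Icc a b)) :
    ContinuousOn (ODE.picard F a c u) (Icc a b) :=
  continuousOn_const.add <| (intervalIntegral.continuousOn_primitive_interval'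
    (hF.intervalIntegrable_comp u hu) left_mem_uIcc).mono Icc_subset_uIcc

/-- The Picard operator `u ↦ (x ↦ c + ∫ₐˣ F(t, u(t)) dt)` as a self-map of `C([a, b], E)`, whose
fixed points are the Carathéodory solutions. Curves are extended by constants outside `[a, b]`. -/
noncomputable def picardOperator (w : C(Icc a b, E)) : C(Icc a b, E) where
  toFun := (Icc a b).domRestrict (ODE.picard F a c (IccExtend hab w))
  continuous_toFun := (hF.continuousOn_picard c w.continuous.Icc_extend'.continuousOn).domRestrict

theorem isFixedPt_picardOperator_iff {w : C(Icc a b, E)} :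
    Function.IsFixedPt (hF.picardOperator c hab) w ↔
      IsCaratheodorySolution F a b c (IccExtend hab w) := by
  refine ⟨fun hw => ⟨w.continuous.Icc_extend'.continuousOn, fun x hx => ?_⟩, fun hw => ?_⟩
  · rw [IccExtend_of_mem hab w hx]
    exact (DFunLike.congr_fun hw ⟨x, hx⟩).symm
  · ext x
    exact (hw.eqOn_picard x.2).symm.trans (IccExtend_val hab w x)

theorem dist_picardOperator_apply_le {w₁ w₂ : C(Icc a b, E)} {η : ℝ → ℝ}
    (hη : ContinuousOn η (Icc a b)) (hw : ∀ t : Icc a b, dist (w₁ t) (w₂ t) ≤ η t) (x : Icc a b) :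
    dist (hF.picardOperator c hab w₁ x) (hF.picardOperator c hab w₂ x) ≤
      ∫ t in a..x, η t * k t := by
  have hx : uIcc a (x : ℝ) ⊆ uIcc a b :=
    uIcc_subset_uIcc_left (Icc_subset_uIcc x.2)
  have hint (w : C(Icc a b, E)) :
      IntervalIntegrable (fun t => F t (IccExtend hab w t)) volume a x :=
    (hF.intervalIntegrable_comp _ w.continuous.Icc_extend'.continuousOn).mono_set hx
  change dist (ODE.picard F a c _ x) (ODE.picard F a c _ x) ≤ _
  rw [dist_eq_norm, ODE.picard_apply, ODE.picard_apply, add_sub_add_left_eq_sub,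
    ← intervalIntegral.integral_sub (hint w₁) (hint w₂)]
  refine intervalIntegral.norm_integral_le_of_norm_le x.2.1 ?_
    ((hF.intervalIntegrable_const.mono_set hx).continuousOn_mul
      (hη.mono (hx.trans (uIcc_of_le hab).subset)))
  filter_upwards [(ae_restrict_iff' measurableSet_Ioc).1 hF.lipschitzWith] with t hL ht
  have htab : t ∈ Ioc a b := ⟨ht.1, ht.2.trans x.2.2⟩
  rw [IccExtend_of_mem hab w₁ (Ioc_subset_Icc_self htab),
    IccExtend_of_mem hab w₂ (Ioc_subset_Icc_self htab), ← dist_eq_norm, mul_comm]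
  exact ((hL htab).dist_le_mul _ _).trans (by gcongr; exact hw _)

theorem dist_iterate_picardOperator_apply_le (n : ℕ) (w₁ w₂ : C(Icc a b, E)) (x : Icc a b) :
    dist ((hF.picardOperator c hab)^[n] w₁ x) ((hF.picardOperator c hab)^[n] w₂ x) ≤
      (∫ t in a..x, (k t : ℝ)) ^ n / n ! * dist w₁ w₂ := by
  induction n generalizing x with
  | zero => simpa using ContinuousMap.dist_apply_le_dist x
  | succ n ih =>
    have hK : ContinuousOn (fun x => ∫ t in a..x, (k t : ℝ)) (Icc a b) :=
      (intervalIntegral.continuousOn_primitive_interval' hF.intervalIntegrable_const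
        left_mem_uIcc).mono Icc_subset_uIcc
    have hk : IntervalIntegrable (fun t => (k t : ℝ)) volume a x :=
      hF.intervalIntegrable_const.mono_set (uIcc_subset_uIcc_left (Icc_subset_uIcc x.2))
    rw [Function.iterate_succ_apply', Function.iterate_succ_apply']
    calc _ ≤ ∫ t in a..x, (∫ s in a..t, (k s : ℝ)) ^ n / n ! * dist w₁ w₂ * k t :=
          hF.dist_picardOperator_apply_le c hab (by fun_prop) ih x
      _ = dist w₁ w₂ / n ! * ∫ t in a..x, (∫ s in a..t, (k s : ℝ)) ^ n * k t := by
          rw [← intervalIntegral.integral_const_mul]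
          congr 1 with t
          ring
      _ = _ := by
          rw [integral_pow_primitive_mul hk, Nat.factorial_succ]
          push_cast
          field_simp

theorem exists_contractingWith_iterate_picardOperator :
    ∃ (n : ℕ) (q : ℝ≥0), ContractingWith q (hF.picardOperator c hab)^[n] := by
  have hnonneg {x y : ℝ} (hxy : x ≤ y) : 0 ≤ ∫ t in x..y, (k t : ℝ) :=
    intervalIntegral.integral_nonneg hxy fun t _ => (k t).2
  obtain ⟨n, hn⟩ := ((FloorSemiring.tendsto_pow_div_factorial_atTop
    (∫ t in a..b, (k t : ℝ))).eventually (gt_mem_nhds zero_lt_one)).exists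
  have hq : 0 ≤ (∫ t in a..b, (k t : ℝ)) ^ n / n ! :=
    div_nonneg (pow_nonneg (hnonneg hab) n) (by positivity)
  refine ⟨n, ⟨_, hq⟩, hn, LipschitzWith.of_dist_le_mul fun w₁ w₂ =>
    (ContinuousMap.dist_le (mul_nonneg hq dist_nonneg)).2 fun x =>
      (hF.dist_iterate_picardOperator_apply_le c hab n w₁ w₂ x).trans ?_⟩
  change _ ≤ (∫ t in a..b, (k t : ℝ)) ^ n / n ! * _
  gcongr
  · exact hnonneg x.2.1
  · exact intervalIntegral.integral_mono_interval le_rfl x.2.1 x.2.2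
      (.of_forall fun t => (k t).2) hF.intervalIntegrable_const

include hF hab in
theorem exists_isCaratheodorySolution [CompleteSpace E] :
    ∃ u, IsCaratheodorySolution F a b c u :=
  let ⟨_, _, hq⟩ := hF.exists_contractingWith_iterate_picardOperator c hab
  ⟨_, (hF.isFixedPt_picardOperator_iff c hab).1 hq.isFixedPt_fixedPoint_iterate⟩

end IsCaratheodoryLipschitz

theorem IsCaratheodorySolution.eqOn (hF : IsCaratheodoryLipschitz F k a b) (hab : a ≤ b)
    (hu : IsCaratheodorySolution F a b c u) (hv : IsCaratheodorySolution F a b c v) :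
    EqOn u v (Icc a b) := by
  obtain ⟨n, q, hq⟩ := hF.exists_contractingWith_iterate_picardOperator c hab
  have restrict_isFixedPt {w : ℝ → E} (hw : IsCaratheodorySolution F a b c w) :
      Function.IsFixedPt (hF.picardOperator c hab) ⟨_, hw.continuousOn.domRestrict⟩ :=
    (hF.isFixedPt_picardOperator_iff c hab).2 <|
      hw.congr fun x hx => (IccExtend_of_mem hab ((Icc a b).domRestrict w) hx).symm
  have heq := hq.fixedPoint_unique' ((restrict_isFixedPt hu).iterate n)
    ((restrict_isFixedPt hv).iterate n)
  exact fun x hx => DFunLike.congr_fun heq ⟨x, hx⟩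

end CaratheodoryEquation

section SmallIntegrals

variable {α : Type*} [MeasurableSpace α] {μ : Measure α} [IsFiniteMeasure μ] {ρ : α → ℝ}

theorem norm_inv_one_add_le_one {q : ℝ} (hq : 0 ≤ q) : ‖(1 + q)⁻¹‖ ≤ 1 := by
  rw [Real.norm_of_nonneg (by positivity)]
  exact inv_le_one_of_one_le₀ (le_add_of_nonneg_right hq)

theorem integrable_inv_one_add_mul (hρ : AEMeasurable ρ μ) (hρ₀ : ∀ᵐ x ∂μ, 0 ≤ ρ x) {r : ℝ}
    (hr : 0 ≤ r) : Integrable (fun x => (1 + r * ρ x)⁻¹) μ := by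
  refine (integrable_const (1 : ℝ)).mono'
    ((hρ.const_mul r).const_add 1).inv.aestronglyMeasurable ?_
  filter_upwards [hρ₀] with x hx using norm_inv_one_add_le_one (mul_nonneg hr hx)

theorem tendsto_integral_inv_one_add_natCast_mul (hρ : AEMeasurable ρ μ)
    (hpos : ∀ᵐ x ∂μ, 0 < ρ x) :
    Tendsto (fun n : ℕ => ∫ x, (1 + n * ρ x)⁻¹ ∂μ) atTop (𝓝 0) := by
  rw [← integral_zero α ℝ (μ := μ)]
  refine tendsto_integral_of_dominated_convergence (fun _ => 1)
    (fun n => ((hρ.const_mul (n : ℝ)).const_add 1).inv.aestronglyMeasurable)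
    (integrable_const 1) (fun n => ?_) ?_
  · filter_upwards [hpos] with x hx
    exact norm_inv_one_add_le_one (by positivity)
  · filter_upwards [hpos] with x hx
    exact (tendsto_atTop_add_const_left _ 1
      (tendsto_natCast_atTop_atTop.atTop_mul_const hx)).inv_tendsto_atTop

theorem le_inv_one_add_add_mul {s q : ℝ} (hs : s ≤ 1) (hs₀ : 0 ≤ s) (hq : 0 ≤ q) :
    s ≤ (1 + q)⁻¹ + q * s := by
  have h : (1 - q) * s ≤ (1 + q)⁻¹ := by
    rw [← one_div, le_div_iff₀ (by positivity)]
    nlinarith [mul_nonneg hs₀ (sq_nonneg q)]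
  linarith

theorem exists_pos_forall_integral_lt_of_integral_mul_le (hρ : Integrable ρ μ)
    (hpos : ∀ᵐ x ∂μ, 0 < ρ x) {ε : ℝ} (hε : 0 < ε) :
    ∃ δ > 0, ∀ s : α → ℝ, AEStronglyMeasurable s μ → (∀ᵐ x ∂μ, s x ∈ Icc 0 1) →
      ∫ x, ρ x * s x ∂μ ≤ δ → ∫ x, s x ∂μ < ε := by
  obtain ⟨N, hN⟩ := ((tendsto_integral_inv_one_add_natCast_mul hρ.aemeasurable hpos).eventually
    (gt_mem_nhds (half_pos hε))).exists
  refine ⟨ε / (2 * (N + 1)), by positivity, fun s hsm hs hδ => ?_⟩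
  have hs_bound : ∀ᵐ x ∂μ, ‖s x‖ ≤ 1 := hs.mono fun x hx => by
    rw [Real.norm_of_nonneg hx.1]
    exact hx.2
  have hs_int : Integrable s μ := .of_bound hsm 1 hs_bound
  have hinv_int := integrable_inv_one_add_mul hρ.aemeasurable (hpos.mono fun _ => le_of_lt)
    N.cast_nonneg
  have hρs_int : Integrable (fun x => N * (ρ x * s x)) μ := (hρ.mul_bdd hsm hs_bound).const_mul _
  calc ∫ x, s x ∂μ ≤ ∫ x, (1 + N * ρ x)⁻¹ + N * (ρ x * s x) ∂μ := by
        refine integral_mono_ae hs_int (hinv_int.add hρs_int) ?_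
        filter_upwards [hs, hpos] with x hx hρx
        rw [← mul_assoc]
        exact le_inv_one_add_add_mul hx.2 hx.1 (by positivity)
    _ = (∫ x, (1 + N * ρ x)⁻¹ ∂μ) + N * ∫ x, ρ x * s x ∂μ := by
        rw [integral_add hinv_int hρs_int, integral_const_mul]
    _ < ε / 2 + N * (ε / (2 * (N + 1))) := add_lt_add_of_lt_of_le hN (by gcongr)
    _ ≤ ε / 2 + ε / 2 := by
        gcongr
        rw [mul_div_assoc', div_le_div_iff₀ (by positivity) two_pos]
        nlinarith
    _ = ε := add_halves ε

end SmallIntegrals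

section TrigonometricEstimates

theorem lipschitzWith_sin_sq : LipschitzWith 1 fun x : ℝ => sin x ^ 2 := by
  refine LipschitzWith.of_dist_le_mul fun x y => ?_
  have hcos := Real.lipschitzWith_cos.dist_le_mul (2 * x) (2 * y)
  simp only [NNReal.coe_one, one_mul, Real.dist_eq, ← mul_sub, abs_mul, abs_two] at hcos ⊢
  rw [sin_sq_eq_half_sub, sin_sq_eq_half_sub,
    show 1 / 2 - cos (2 * x) / 2 - (1 / 2 - cos (2 * y) / 2) =
      -(cos (2 * x) - cos (2 * y)) / 2 by ring, abs_div, abs_neg, abs_two]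
  linarith

theorem one_sub_mul_sin_sq_le_cos_sq_pow (n : ℕ) (x : ℝ) :
    1 - n * sin x ^ 2 ≤ (cos x ^ 2) ^ n := by
  have h := one_add_mul_le_pow (a := -sin x ^ 2) (by linarith [sin_sq_le_one x]) n
  rwa [mul_neg, ← sub_eq_add_neg, ← sub_eq_add_neg, ← cos_sq'] at h

theorem tendsto_integral_cos_sq_pow (a b : ℝ) :
    Tendsto (fun n : ℕ => ∫ t in a..b, (cos t ^ 2) ^ n) atTop (𝓝 0) := by
  rw [← intervalIntegral.integral_zero (a := a) (b := b) (μ := volume)]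
  refine intervalIntegral.tendsto_integral_filter_of_dominated_convergence (fun _ => (1 : ℝ))
    (.of_forall fun n => Continuous.aestronglyMeasurable (by fun_prop))
    (.of_forall fun n => .of_forall fun t _ => ?_) intervalIntegrable_const ?_
  · rw [Real.norm_of_nonneg (by positivity)]
    exact pow_le_one₀ (by positivity) (cos_sq_le_one t)
  · have hzeros : (range fun m : ℤ => (m : ℝ) * π).Countable := countable_range _
    filter_upwards [hzeros.ae_notMem volume] with t ht _
    have hsin : sin t ≠ 0 := fun h => ht (sin_eq_zero_iff.1 h)
    refine tendsto_pow_atTop_nhds_zero_of_lt_one (by positivity) ?_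
    rw [cos_sq']
    linarith [pow_pos (abs_pos.2 hsin) 2, sq_abs (sin t)]

end TrigonometricEstimates

section PruferEquation

variable {ρ u : ℝ → ℝ} {a b c lam : ℝ}

/-- The right-hand side `cos² θ + λ ρ(t) sin² θ` of the equation satisfied by the Prüfer angle `θ`,
`tan θ = y / y'`, of a solution of the weighted Sturm–Liouville equation `-y'' = λ ρ y`. -/
noncomputable def pruferField (ρ : ℝ → ℝ) (lam t θ : ℝ) : ℝ :=
  cos θ ^ 2 + lam * ρ t * sin θ ^ 2

theorem lipschitzWith_pruferField (ρ : ℝ → ℝ) (lam t : ℝ) :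
    LipschitzWith ‖lam * ρ t - 1‖₊ (pruferField ρ lam t) := by
  refine LipschitzWith.of_dist_le_mul fun y z => ?_
  have hsub : pruferField ρ lam t y - pruferField ρ lam t z =
      (lam * ρ t - 1) * (sin y ^ 2 - sin z ^ 2) := by
    simp only [pruferField, cos_sq']
    ring
  rw [dist_eq_norm, hsub, norm_mul, coe_nnnorm]
  gcongr
  simpa [dist_eq_norm] using lipschitzWith_sin_sq.dist_le_mul y z

theorem intervalIntegrable_mul_sin_sq (hab : a ≤ b) (hρ : IntervalIntegrable ρ volume a b)
    (hu : ContinuousOn u (Icc a b)) :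
    IntervalIntegrable (fun t => ρ t * sin (u t) ^ 2) volume a b := by
  rw [← uIcc_of_le hab] at hu
  exact hρ.mul_continuousOn (by fun_prop)

theorem isCaratheodoryLipschitz_pruferField (hab : a ≤ b) (hρ : IntervalIntegrable ρ volume a b)
    (lam : ℝ) :
    IsCaratheodoryLipschitz (pruferField ρ lam) (fun t => ‖lam * ρ t - 1‖₊) a b where
  intervalIntegrable_comp u hu := by
    have hsin := intervalIntegrable_mul_sin_sq hab (hρ.const_mul lam) hu
    rw [← uIcc_of_le hab] at hu
    exact (ContinuousOn.intervalIntegrable (by fun_prop)).add hsin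
  intervalIntegrable_const := ((hρ.const_mul lam).sub intervalIntegrable_const).norm
  lipschitzWith := .of_forall (lipschitzWith_pruferField ρ lam)

theorem mul_integral_mul_sin_sq_le (hab : a ≤ b) (hρ : IntervalIntegrable ρ volume a b)
    (hu : IsCaratheodorySolution (pruferField ρ lam) a b c u) :
    lam * ∫ t in a..b, ρ t * sin (u t) ^ 2 ≤ u b - c := by
  have hsin := intervalIntegrable_mul_sin_sq hab hρ hu.continuousOn
  have hub : u b - c = ∫ t in a..b, pruferField ρ lam t (u t) := by
    rw [hu.eqOn_picard (right_mem_Icc.2 hab), ODE.picard_apply, add_sub_cancel_left]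
  rw [hub, ← intervalIntegral.integral_const_mul]
  refine intervalIntegral.integral_mono_on hab (hsin.const_mul lam)
    ((isCaratheodoryLipschitz_pruferField hab hρ lam).intervalIntegrable_comp u hu.continuousOn)
    fun t _ => ?_
  rw [pruferField, ← mul_assoc]
  exact le_add_of_nonneg_left (sq_nonneg _)

theorem sub_mul_integral_sin_sq_le_integral_cos_sq_pow (hab : a ≤ b) (hlam : 0 ≤ lam)
    (hρ : IntervalIntegrable ρ volume a b) (hρ₀ : ∀ᵐ t ∂volume.restrict (Ioc a b), 0 ≤ ρ t)
    (hu : IsCaratheodorySolution (pruferField ρ lam) a b c u) (n : ℕ) :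
    b - a - (n + 1) * ∫ t in a..b, sin (u t) ^ 2 ≤ ∫ y in c..u b, (cos y ^ 2) ^ n := by
  have hF := (isCaratheodoryLipschitz_pruferField hab hρ lam).intervalIntegrable_comp u
    hu.continuousOn
  have hpicard := hu.eqOn_picard
  have hcont := hu.continuousOn
  rw [← uIcc_of_le hab] at hpicard hcont
  have hua : u a = c := (hpicard left_mem_uIcc).trans ODE.picard_apply₀
  have hsin : IntervalIntegrable (fun t => (n + 1) * sin (u t) ^ 2) volume a b :=
    ContinuousOn.intervalIntegrable (by fun_prop)
  calc b - a - (n + 1) * ∫ t in a..b, sin (u t) ^ 2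
      = ∫ t in a..b, (1 - (n + 1) * sin (u t) ^ 2) := by
        rw [intervalIntegral.integral_sub intervalIntegrable_const hsin,
          intervalIntegral.integral_const_mul, integral_one]
    _ ≤ ∫ t in a..b, (cos (u t) ^ 2) ^ n * pruferField ρ lam t (u t) := by
        refine intervalIntegral.integral_mono_ae_restrict hab (intervalIntegrable_const.sub hsin)
          (hF.continuousOn_mul (by fun_prop)) ?_
        rw [restrict_Ioc_eq_restrict_Icc] at hρ₀
        filter_upwards [hρ₀] with t ht
        calc 1 - (n + 1) * sin (u t) ^ 2 ≤ (cos (u t) ^ 2) ^ (n + 1) := mod_cast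
              one_sub_mul_sin_sq_le_cos_sq_pow (n + 1) (u t)
          _ = (cos (u t) ^ 2) ^ n * cos (u t) ^ 2 := pow_succ _ n
          _ ≤ (cos (u t) ^ 2) ^ n * pruferField ρ lam t (u t) := by
              gcongr
              exact le_add_of_nonneg_right (by positivity)
    _ = ∫ y in c..u b, (cos y ^ 2) ^ n := by
        rw [integral_comp_mul_of_eqOn_primitive (g := fun y => (cos y ^ 2) ^ n) (by fun_prop) hF
          hpicard, hua]

theorem eventually_forall_le_of_isCaratheodorySolution_pruferField (hab : a < b)
    (hρ : IntervalIntegrable ρ volume a b) (hpos : ∀ᵐ t ∂volume.restrict (Ioc a b), 0 < ρ t)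
    (c M : ℝ) :
    ∀ᶠ lam in atTop, ∀ u, IsCaratheodorySolution (pruferField ρ lam) a b c u → M ≤ u b := by
  obtain ⟨n, hn⟩ := ((tendsto_integral_cos_sq_pow c M).eventually
    (gt_mem_nhds (half_pos (sub_pos.2 hab)))).exists
  obtain ⟨δ, hδ, hsmall⟩ := exists_pos_forall_integral_lt_of_integral_mul_le
    ((intervalIntegrable_iff_integrableOn_Ioc_of_le hab.le).1 hρ) hpos
    (ε := (b - a) / 2 / (n + 1)) (by have := sub_pos.2 hab; positivity)
  simp only [← intervalIntegral.integral_of_le hab.le] at hsmall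
  filter_upwards [eventually_gt_atTop 0, eventually_ge_atTop ((M - c) / δ)] with lam hlam hlamδ u hu
  by_contra! huM
  have hρsin : ∫ t in a..b, ρ t * sin (u t) ^ 2 ≤ δ := by
    refine le_of_mul_le_mul_left ?_ hlam
    linarith [mul_integral_mul_sin_sq_le hab.le hρ hu, (div_le_iff₀ hδ).1 hlamδ]
  have hsin : ∫ t in a..b, sin (u t) ^ 2 < (b - a) / 2 / (n + 1) := by
    have hcont : ContinuousOn (fun t => sin (u t) ^ 2) (Ioc a b) := by
      have := hu.continuousOn.mono Ioc_subset_Icc_self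
      fun_prop
    exact hsmall _ (hcont.aestronglyMeasurable measurableSet_Ioc)
      (.of_forall fun t => ⟨sq_nonneg _, sin_sq_le_one _⟩) hρsin
  have hmono : ∫ y in c..u b, (cos y ^ 2) ^ n ≤ ∫ y in c..M, (cos y ^ 2) ^ n := by
    have hint (x y : ℝ) : IntervalIntegrable (fun t => (cos t ^ 2) ^ n) volume x y :=
      Continuous.intervalIntegrable (by fun_prop) x y
    rw [← sub_nonneg, intervalIntegral.integral_interval_sub_left (hint c M) (hint c (u b))]
    exact intervalIntegral.integral_nonneg huM.le fun y _ => by positivity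
  have hlower := sub_mul_integral_sin_sq_le_integral_cos_sq_pow hab.le hlam.le hρ
    (hpos.mono fun _ => le_of_lt) hu n
  rw [lt_div_iff₀' (by positivity)] at hsin
  linarith

end PruferEquation

theorem stmt_8_general {ρ : ℝ → ℝ} {a b : ℝ} (hab : a < b) (hρ : IntervalIntegrable ρ volume a b)
    (hpos : ∀ᵐ t ∂volume.restrict (Ioc a b), 0 < ρ t) (θ₀ : ℝ) :
    ∃ Θ : ℝ → ℝ → ℝ,
      (∀ lam, IsCaratheodorySolution (pruferField ρ lam) a b θ₀ (Θ lam) ∧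
        ∀ ψ, IsCaratheodorySolution (pruferField ρ lam) a b θ₀ ψ → EqOn ψ (Θ lam) (Icc a b)) ∧
      Tendsto (fun lam => Θ lam b) atTop atTop := by
  have hF := isCaratheodoryLipschitz_pruferField hab.le hρ
  choose Θ hΘ using fun lam => (hF lam).exists_isCaratheodorySolution θ₀ hab.le
  refine ⟨Θ, fun lam => ⟨hΘ lam, fun ψ hψ => hψ.eqOn (hF lam) hab.le (hΘ lam)⟩,
    tendsto_atTop.2 fun M => ?_⟩
  filter_upwards [eventually_forall_le_of_isCaratheodorySolution_pruferField hab hρ hpos θ₀ M]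
    with lam hlam using hlam _ (hΘ lam)

/- STATEMENT 8: For ρ ∈ L¹(0,1), ρ > 0 a.e., and θ₀ ∈ (−π/2, π/2], for each λ ≥ 1 there is a
unique absolutely continuous (Carathéodory) solution θ_λ on [0,1] of
  θ_λ' = cos²θ_λ + λρ sin²θ_λ,  θ_λ(0) = θ₀,
and θ_λ(1) → +∞ as λ → +∞. A Carathéodory solution is encoded by the equivalent integral
equation θ(x) = θ₀ + ∫₀ˣ (cos²θ(t) + λρ(t) sin²θ(t)) dt together with continuity on [0,1]. -/
theorem stmt_8 (ρ : ℝ → ℝ) (hρ : IntegrableOn ρ (Ioo (0:ℝ) 1))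
    (hρpos : ∀ᵐ x ∂(volume.restrict (Ioo (0:ℝ) 1)), 0 < ρ x)
    (θ₀ : ℝ) (hθ₀ : θ₀ ∈ Ioc (-(π / 2)) (π / 2)) :
    ∃ Θ : ℝ → ℝ → ℝ,
      (∀ lam : ℝ, 1 ≤ lam →
        (ContinuousOn (Θ lam) (Icc (0:ℝ) 1) ∧
          ∀ x ∈ Icc (0:ℝ) 1,
            Θ lam x = θ₀ + ∫ t in (0:ℝ)..x,
              (Real.cos (Θ lam t) ^ 2 + lam * ρ t * Real.sin (Θ lam t) ^ 2)) ∧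
        (∀ ψ : ℝ → ℝ, ContinuousOn ψ (Icc (0:ℝ) 1) →
          (∀ x ∈ Icc (0:ℝ) 1,
            ψ x = θ₀ + ∫ t in (0:ℝ)..x,
              (Real.cos (ψ t) ^ 2 + lam * ρ t * Real.sin (ψ t) ^ 2)) →
          ∀ x ∈ Icc (0:ℝ) 1, ψ x = Θ lam x)) ∧
      Tendsto (fun lam => Θ lam 1) atTop atTop := by
  obtain ⟨Θ, hΘ, hlim⟩ := stmt_8_general zero_lt_one
    ((intervalIntegrable_iff_integrableOn_Ioo_of_le zero_le_one).2 hρ)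
    (by rwa [← restrict_Ioo_eq_restrict_Ioc]) θ₀
  exact ⟨Θ, fun lam _ => ⟨⟨(hΘ lam).1.continuousOn, (hΘ lam).1.eqOn_picard⟩,
    fun ψ hψ hψeq => (hΘ lam).2 ψ ⟨hψ, hψeq⟩⟩, hlim⟩
end

section
/- Let p ∈ (1,∞]. Let (λ_n)_{n≥0} be real numbers for which there exist C₀ > 0 and N ∈ ℕ with λ_n ≥ C₀ n for all n ≥ N. Let (e_n)_{n≥0} be functions in W^{2,p}(0,1) with ‖e_n‖_{W^{2,p}(0,1)} ≤ C (1 + |λ_n|^{3/2}) for all n, for some C > 0, and let (c_n)_{n≥0} be real numbers with Σ_{n≥0} |c_n|² < ∞. Then for every 0 < ε < τ, the series u(t) = Σ_{n≥0} c_n e^{−λ_n t} e_n converges in W^{2,p}(0,1) for each t ∈ [ε,τ], the map t ↦ u(t) is infinitely differentiable from [ε,τ] to W^{2,p}(0,1) with u^{(k)}(t) = Σ_{n≥0} c_n (−λ_n)^k e^{−λ_n t} e_n, and there exist constants M, δ > 0 such that ‖u^{(k)}(t)‖_{W^{2,p}(0,1)} ≤ M k! / δ^k for all t ∈ [ε,τ]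 and all k ≥ 0; that is, u ∈ G¹([ε,τ], W^{2,p}(0,1)). -/
open MeasureTheory Set Filter Topology

/-!
On `[a + δ, b - δ]` the exponential series for `exp (δ * |l|)` gives
`|l| ^ k * exp (-l * t) ≤ k! / δ ^ k * (exp (-l * a) + exp (-l * b))`, whatever the sign of `l`.
So a series `∑ exp (-lam n * t) • x n` that converges absolutely at two points `a < b` can be
differentiated termwise to any order on `(a, b)`, with Gevrey-1 bounds at distance `δ` from the
endpoints. If `∑ exp (-lam n * a)` converges for all `a > 0`, coefficients of polynomial growth in
`lam n` give absolute convergence at every positive time, since a power of `lam n` costs only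
`exp (a / 2 * lam n)`.
-/

open Asymptotics
open scoped Nat

theorem abs_pow_mul_exp_le {a b δ t : ℝ} (hδ : 0 < δ) (ht : t ∈ Icc (a + δ) (b - δ)) (k : ℕ)
    (l : ℝ) :
    |l| ^ k * Real.exp (-l * t) ≤ k ! / δ ^ k * (Real.exp (-l * a) + Real.exp (-l * b)) := by
  have hpow : |l| ^ k ≤ k ! / δ ^ k * Real.exp (δ * |l|) := by
    have h := Real.pow_div_factorial_le_exp (δ * |l|) (by positivity) k
    rw [div_le_iff₀ (by positivity), mul_pow] at h
    rw [div_mul_eq_mul_div, le_div_iff₀ (by positivity)]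
    linarith
  have hexp : Real.exp (δ * |l| + -l * t) ≤ Real.exp (-l * a) + Real.exp (-l * b) := by
    rcases le_total 0 l with hl | hl
    · refine le_add_of_le_of_nonneg (Real.exp_le_exp.2 ?_) (Real.exp_pos _).le
      rw [abs_of_nonneg hl]
      nlinarith [ht.1]
    · refine le_add_of_nonneg_of_le (Real.exp_pos _).le (Real.exp_le_exp.2 ?_)
      rw [abs_of_nonpos hl]
      nlinarith [ht.2]
  calc |l| ^ k * Real.exp (-l * t)
      ≤ k ! / δ ^ k * Real.exp (δ * |l|) * Real.exp (-l * t) := by gcongr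
    _ = k ! / δ ^ k * Real.exp (δ * |l| + -l * t) := by rw [mul_assoc, Real.exp_add]
    _ ≤ k ! / δ ^ k * (Real.exp (-l * a) + Real.exp (-l * b)) := by gcongr

section DirichletSeries

variable {ι B : Type*} [NormedAddCommGroup B] [NormedSpace ℝ B]

/-- The Dirichlet series with real exponents `lam` and vector coefficients `x`, as a function of a
real variable. Its value is `0` where the series is not summable. -/
noncomputable def dirichletSeries (lam : ι → ℝ) (x : ι → B) (t : ℝ) : B :=
  ∑' n, Real.exp (-lam n * t) • x n

variable {lam : ι → ℝ} {x : ι → B} {a b δ t : ℝ}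

theorem norm_exp_smul_pow_smul_le (hδ : 0 < δ) (ht : t ∈ Icc (a + δ) (b - δ)) (k : ℕ) (l : ℝ)
    (v : B) :
    ‖Real.exp (-l * t) • (-l) ^ k • v‖ ≤
      k ! / δ ^ k * (Real.exp (-l * a) * ‖v‖ + Real.exp (-l * b) * ‖v‖) := by
  calc ‖Real.exp (-l * t) • (-l) ^ k • v‖
      = |l| ^ k * Real.exp (-l * t) * ‖v‖ := by
        rw [norm_smul, norm_smul, norm_pow, norm_neg, Real.norm_eq_abs, Real.norm_eq_abs,
          Real.abs_exp]
        ring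
    _ ≤ k ! / δ ^ k * (Real.exp (-l * a) + Real.exp (-l * b)) * ‖v‖ := by
        gcongr ?_ * _
        exact abs_pow_mul_exp_le hδ ht k l
    _ = k ! / δ ^ k * (Real.exp (-l * a) * ‖v‖ + Real.exp (-l * b) * ‖v‖) := by ring

theorem exists_pos_mem_Ioo_add_sub (ht : t ∈ Ioo a b) : ∃ δ > 0, t ∈ Ioo (a + δ) (b - δ) := by
  obtain ⟨δ, hδ, hlt⟩ := exists_between (lt_min (sub_pos.2 ht.1) (sub_pos.2 ht.2))
  rw [lt_min_iff] at hlt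
  exact ⟨δ, hδ, by linarith, by linarith⟩

theorem exists_norm_dirichletSeries_pow_smul_le
    (ha : Summable fun n ↦ Real.exp (-lam n * a) * ‖x n‖)
    (hb : Summable fun n ↦ Real.exp (-lam n * b) * ‖x n‖) (hδ : 0 < δ) :
    ∃ M > 0, ∀ k : ℕ, ∀ t ∈ Icc (a + δ) (b - δ),
      ‖dirichletSeries lam (fun n ↦ (-lam n) ^ k • x n) t‖ ≤ M * k ! / δ ^ k := by
  set S := ∑' n, (Real.exp (-lam n * a) * ‖x n‖ + Real.exp (-lam n * b) * ‖x n‖)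
  have hS : 0 ≤ S := tsum_nonneg fun n ↦ by positivity
  refine ⟨S + 1, add_pos_of_nonneg_of_pos hS one_pos, fun k t ht ↦ ?_⟩
  calc ‖dirichletSeries lam (fun n ↦ (-lam n) ^ k • x n) t‖
      ≤ k ! / δ ^ k * S := tsum_of_norm_bounded ((ha.add hb).hasSum.mul_left _)
        fun n ↦ norm_exp_smul_pow_smul_le hδ ht k (lam n) (x n)
    _ ≤ k ! / δ ^ k * (S + 1) := by gcongr; exact le_add_of_nonneg_right zero_le_one
    _ = (S + 1) * k ! / δ ^ k := by ring

variable [CompleteSpace B]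

theorem summable_exp_smul_pow_smul
    (ha : Summable fun n ↦ Real.exp (-lam n * a) * ‖x n‖)
    (hb : Summable fun n ↦ Real.exp (-lam n * b) * ‖x n‖) (ht : t ∈ Ioo a b) (k : ℕ) :
    Summable fun n ↦ Real.exp (-lam n * t) • (-lam n) ^ k • x n := by
  obtain ⟨δ, hδ, htδ⟩ := exists_pos_mem_Ioo_add_sub ht
  exact ((ha.add hb).mul_left _).of_norm_bounded
    fun n ↦ norm_exp_smul_pow_smul_le hδ (Ioo_subset_Icc_self htδ) k (lam n) (x n)

theorem hasDerivAt_dirichletSeries_pow_smul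
    (ha : Summable fun n ↦ Real.exp (-lam n * a) * ‖x n‖)
    (hb : Summable fun n ↦ Real.exp (-lam n * b) * ‖x n‖) (ht : t ∈ Ioo a b) (k : ℕ) :
    HasDerivAt (dirichletSeries lam fun n ↦ (-lam n) ^ k • x n)
      (dirichletSeries lam (fun n ↦ (-lam n) ^ (k + 1) • x n) t) t := by
  obtain ⟨δ, hδ, htδ⟩ := exists_pos_mem_Ioo_add_sub ht
  refine hasDerivAt_tsum_of_isPreconnected ((ha.add hb).mul_left _) isOpen_Ioo
    isPreconnected_Ioo (fun n s _ ↦ ?_)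
    (fun n s hs ↦ norm_exp_smul_pow_smul_le hδ (Ioo_subset_Icc_self hs) (k + 1) (lam n) (x n))
    htδ (summable_exp_smul_pow_smul ha hb ht k) htδ
  have hterm := (((hasDerivAt_id s).const_mul (-lam n)).exp).smul_const ((-lam n) ^ k • x n)
  simpa only [id, mul_one, mul_smul, pow_succ'] using hterm

theorem iteratedDerivWithin_dirichletSeries
    (ha : Summable fun n ↦ Real.exp (-lam n * a) * ‖x n‖)
    (hb : Summable fun n ↦ Real.exp (-lam n * b) * ‖x n‖)
    {s : Set ℝ} (hs : UniqueDiffOn ℝ s) (hsub : s ⊆ Ioo a b) (k : ℕ) :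
    EqOn (iteratedDerivWithin k (dirichletSeries lam x) s)
      (dirichletSeries lam fun n ↦ (-lam n) ^ k • x n) s := by
  induction k with
  | zero => intro t _; simp
  | succ k ih =>
    intro t ht
    rw [iteratedDerivWithin_succ, derivWithin_congr ih (ih ht)]
    exact (hasDerivAt_dirichletSeries_pow_smul ha hb (hsub ht) k).hasDerivWithinAt.derivWithin
      (hs t ht)

theorem contDiffOn_dirichletSeries
    (ha : Summable fun n ↦ Real.exp (-lam n * a) * ‖x n‖)
    (hb : Summable fun n ↦ Real.exp (-lam n * b) * ‖x n‖) :
    ContDiffOn ℝ (⊤ : ℕ∞) (dirichletSeries lam x) (Ioo a b) := by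
  refine contDiffOn_of_differentiableOn_deriv fun k _ ↦ DifferentiableOn.congr (fun t ht ↦ ?_)
    (iteratedDerivWithin_dirichletSeries ha hb isOpen_Ioo.uniqueDiffOn Subset.rfl k)
  exact (hasDerivAt_dirichletSeries_pow_smul ha hb ht k).differentiableAt.differentiableWithinAt

end DirichletSeries

theorem isLittleO_one_add_abs_rpow_exp (r : ℝ) {b : ℝ} (hb : 0 < b) :
    (fun l : ℝ ↦ 1 + |l| ^ r) =o[atTop] fun l ↦ Real.exp (b * l) := by
  refine (Real.isLittleO_one_exp_comp.2 (tendsto_id.const_mul_atTop hb)).add ?_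
  refine (isLittleO_rpow_exp_pos_mul_atTop r hb).congr' ?_ EventuallyEq.rfl
  filter_upwards [eventually_ge_atTop 0] with l hl
  rw [abs_of_nonneg hl]

theorem summable_exp_mul_norm_of_isBigO {ι E : Type*} [SeminormedAddCommGroup E] {lam : ι → ℝ}
    (hlam : ∀ a > 0, Summable fun n ↦ Real.exp (-lam n * a)) {x : ι → E} {r : ℝ}
    (hx : x =O[cofinite] fun n ↦ 1 + |lam n| ^ r) {a : ℝ} (ha : 0 < a) :
    Summable fun n ↦ Real.exp (-lam n * a) * ‖x n‖ := by
  have hlam_top : Tendsto lam cofinite atTop := by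
    simpa using (hlam 1 one_pos).tendsto_cofinite_zero
  have hx_exp : x =O[cofinite] fun n ↦ Real.exp (a / 2 * lam n) :=
    hx.trans ((isLittleO_one_add_abs_rpow_exp r (half_pos ha)).comp_tendsto hlam_top).isBigO
  refine summable_of_isBigO (hlam (a / 2) (half_pos ha)) ?_
  refine ((isBigO_refl _ _).mul hx_exp.norm_left).congr_right fun n ↦ ?_
  rw [← Real.exp_add]
  ring_nf

theorem summable_exp_neg_mul_of_eventually_linear_le {lam : ℕ → ℝ} {C : ℝ} (hC : 0 < C)
    (hlam : ∀ᶠ n : ℕ in atTop, C * n ≤ lam n) {a : ℝ} (ha : 0 < a) :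
    Summable fun n ↦ Real.exp (-lam n * a) := by
  have hgeom : Summable fun n : ℕ ↦ Real.exp (n * -(C * a)) :=
    Real.summable_exp_nat_mul_iff.2 (neg_lt_zero.2 (mul_pos hC ha))
  refine hgeom.of_norm_bounded_eventually_nat ?_
  filter_upwards [hlam] with n hn
  rw [Real.norm_eq_abs, Real.abs_exp, Real.exp_le_exp]
  nlinarith

theorem isBigO_one_of_summable_norm_pow {ι E : Type*} [SeminormedAddCommGroup E] {c : ι → E}
    {m : ℕ} (hm : m ≠ 0) (hc : Summable fun n ↦ ‖c n‖ ^ m) :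
    c =O[cofinite] fun _ ↦ (1 : ℝ) := by
  have hpow : (fun n ↦ ‖c n‖ ^ m) =O[cofinite] fun _ ↦ (1 : ℝ) ^ m := by
    simpa only [one_pow] using hc.tendsto_cofinite_zero.isBigO_one ℝ
  exact (hpow.of_pow hm).of_norm_left

theorem stmt_15_general {ι B : Type*} [NormedAddCommGroup B] [NormedSpace ℝ B] [CompleteSpace B]
    {lam : ι → ℝ} (hlam : ∀ a > 0, Summable fun n ↦ Real.exp (-lam n * a))
    {e : ι → B} {r : ℝ} (he : e =O[cofinite] fun n ↦ 1 + |lam n| ^ r)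
    {c : ι → ℝ} (hc : c =O[cofinite] fun _ ↦ (1 : ℝ))
    {ε τ : ℝ} (hε : 0 < ε) (hετ : ε < τ) :
    (∀ t ∈ Icc ε τ, Summable fun n ↦ (c n * Real.exp (-lam n * t)) • e n) ∧
    ContDiffOn ℝ (⊤ : ℕ∞) (fun t ↦ ∑' n, (c n * Real.exp (-lam n * t)) • e n) (Icc ε τ) ∧
    (∀ k : ℕ, ∀ t ∈ Icc ε τ,
      iteratedDerivWithin k (fun t ↦ ∑' n, (c n * Real.exp (-lam n * t)) • e n) (Icc ε τ) t
        = ∑' n, (c n * (-lam n) ^ k * Real.exp (-lam n * t)) • e n) ∧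
    (∃ M δ : ℝ, 0 < M ∧ 0 < δ ∧ ∀ k : ℕ, ∀ t ∈ Icc ε τ,
      ‖iteratedDerivWithin k (fun t ↦ ∑' n, (c n * Real.exp (-lam n * t)) • e n) (Icc ε τ) t‖
        ≤ M * k ! / δ ^ k) := by
  set x : ι → B := fun n ↦ c n • e n with hx
  have hterm (n : ι) (t : ℝ) :
      (c n * Real.exp (-lam n * t)) • e n = Real.exp (-lam n * t) • x n := by
    rw [mul_comm, mul_smul]
  have hterm_pow (k : ℕ) (n : ι) (t : ℝ) : (c n * (-lam n) ^ k * Real.exp (-lam n * t)) • e n =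
      Real.exp (-lam n * t) • (-lam n) ^ k • x n := by
    rw [hx, smul_smul, smul_smul]
    ring_nf
  have hsum {s : ℝ} (hs : 0 < s) : Summable fun n ↦ Real.exp (-lam n * s) * ‖x n‖ :=
    summable_exp_mul_norm_of_isBigO hlam (by simpa only [one_mul, smul_eq_mul] using hc.smul he) hs
  have hδ : 0 < ε / 2 := half_pos hε
  have ha := hsum hδ
  have hb := hsum (s := τ + ε / 2) (by linarith)
  have hsub : Icc ε τ ⊆ Ioo (ε / 2) (τ + ε / 2) := Icc_subset_Ioo (by linarith) (by linarith)
  have hderiv := iteratedDerivWithin_dirichletSeries ha hb (uniqueDiffOn_Icc hετ) hsub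
  simp only [hterm, hterm_pow]
  refine ⟨fun t ht ↦ ?_, (contDiffOn_dirichletSeries ha hb).mono hsub, hderiv, ?_⟩
  · simpa only [pow_zero, one_smul] using summable_exp_smul_pow_smul ha hb (hsub ht) 0
  obtain ⟨M, hM, hbound⟩ := exists_norm_dirichletSeries_pow_smul_le ha hb hδ
  refine ⟨M, ε / 2, hM, hδ, fun k t ht ↦ ?_⟩
  exact (congrArg norm (hderiv k ht)).trans_le (hbound k t (by simpa using ht))

/- STATEMENT 15: Gevrey-1 regularity of u(t) = Σ c_n e^{−λ_n t} e_n on [ε,τ], where the e_n lie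
in W^{2,p}(0,1) with ‖e_n‖_{W^{2,p}} ≤ C(1 + |λ_n|^{3/2}).
The Banach space W^{2,p}(0,1) is modeled as an abstract (complete) normed space B containing
the elements e_n with the stated norm bounds — the statement only uses its Banach space
structure. Smoothness of t ↦ u(t) on [ε,τ] and the derivative formula/bounds are expressed
with iteratedDerivWithin on Icc ε τ. -/
theorem stmt_15 (p : ENNReal) (hp : 1 < p)
    (B : Type*) [NormedAddCommGroup B] [NormedSpace ℝ B] [CompleteSpace B]
    (lam : ℕ → ℝ) (C₀ : ℝ) (hC₀ : 0 < C₀) (N : ℕ) (hlin : ∀ n : ℕ, N ≤ n → C₀ * n ≤ lam n)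
    (e : ℕ → B) (C : ℝ) (hC : 0 < C)
    (he : ∀ n : ℕ, ‖e n‖ ≤ C * (1 + |lam n| ^ ((3:ℝ) / 2)))
    (c : ℕ → ℝ) (hc : Summable fun n => |c n| ^ 2)
    (ε τ : ℝ) (hε : 0 < ε) (hετ : ε < τ) :
    (∀ t ∈ Icc ε τ, Summable fun n : ℕ => (c n * Real.exp (-(lam n) * t)) • e n) ∧
    ContDiffOn ℝ (⊤ : ℕ∞)
      (fun t : ℝ => ∑' n : ℕ, (c n * Real.exp (-(lam n) * t)) • e n) (Icc ε τ) ∧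
    (∀ k : ℕ, ∀ t ∈ Icc ε τ,
      iteratedDerivWithin k
          (fun t : ℝ => ∑' n : ℕ, (c n * Real.exp (-(lam n) * t)) • e n) (Icc ε τ) t
        = ∑' n : ℕ, (c n * (-(lam n)) ^ k * Real.exp (-(lam n) * t)) • e n) ∧
    (∃ M δ : ℝ, 0 < M ∧ 0 < δ ∧ ∀ k : ℕ, ∀ t ∈ Icc ε τ,
      ‖iteratedDerivWithin k
          (fun t : ℝ => ∑' n : ℕ, (c n * Real.exp (-(lam n) * t)) • e n) (Icc ε τ) t‖
        ≤ M * (Nat.factorial k : ℝ) / δ ^ k) := by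
  have he' : e =O[cofinite] fun n ↦ 1 + |lam n| ^ ((3 : ℝ) / 2) :=
    .of_bound C (.of_forall fun n ↦ (he n).trans_eq (by rw [Real.norm_of_nonneg (by positivity)]))
  exact stmt_15_general
    (fun _ ↦ summable_exp_neg_mul_of_eventually_linear_le hC₀ (eventually_atTop.2 ⟨N, hlin⟩))
    he' (isBigO_one_of_summable_norm_pow two_ne_zero hc) hε hετ
end
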